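/- Let k be a positive integer, δ ∈ (0,1) with k/δ > 1, write L = ln(k/δ), and let N be a real with N > k L. Let μ̂_1, …, μ̂_k be nonnegative reals, write Σ̂ = Σ_{i=1}^k μ̂_i, and assume Σ̂ ≥ 1 and that t = N/Σ̂ − (√2 + 2/3) √( k (N/Σ̂) L ) satisfies t ≥ 0. Then Σ_{i=1}^k [ μ̂_i t + sqrt(2 t μ̂_i L) + (2/3) L ] ≤ N. -/

import Mathlib

open Real

/-!
Let the slacks be `μ i * t + √(a * t * μ i * L) + b * L`, and write `S = ∑ i, μ i` and `K = k * L`.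
By Cauchy–Schwarz they sum to at most `S t + √a √(K (S t)) + b K`. Since `S t ≤ N` and `K ≤ N`, both
`√(K (S t))` and `K` are at most `√(K N)`, so the last two terms cost at most `(√a + b) √(K N)`.
Subtracting `(√a + b) √(K (N / S))` from `N / S` in the choice of `t` leaves that much room,
because `S √(K (N / S)) = √S √(K N)` and `S ≥ 1`. The paper has `a = 2` and `b = 2 / 3`.
-/

section RealSqrt

variable {S c K N t : ℝ}

theorem le_sqrt_mul_of_le {x y : ℝ} (hx : 0 ≤ x) (hxy : x ≤ y) : x ≤ √(x * y) :=
  le_sqrt_of_sq_le (by rw [sq]; gcongr)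

theorem sqrt_le_mul_sqrt_div (hS : 1 ≤ S) (x : ℝ) : √x ≤ S * √(x / S) := by
  have hS0 : 0 < S := zero_lt_one.trans_le hS
  calc √x = √S * √(x / S) := by rw [← sqrt_mul hS0.le, mul_div_cancel₀ x hS0.ne']
    _ ≤ S * √(x / S) := by gcongr; exact sqrt_le_self_iff.2 (.inr hS)

theorem mul_add_mul_sqrt_le_of_le_div_sub (hc : 0 ≤ c) (hS : 1 ≤ S)
    (ht : t ≤ N / S - c * √(K * (N / S))) : S * t + c * √(K * N) ≤ N := by
  have hS0 : 0 < S := zero_lt_one.trans_le hS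
  calc S * t + c * √(K * N)
      ≤ S * (N / S - c * √(K * (N / S))) + c * (S * √(K * N / S)) := by
        gcongr
        exact sqrt_le_mul_sqrt_div hS (K * N)
    _ = N := by rw [mul_sub, mul_div_cancel₀ N hS0.ne', ← mul_div_assoc]; ring

end RealSqrt

section Slack

variable {ι : Type*} {s : Finset ι} {f μ : ι → ℝ} {a b L N t : ℝ}

theorem sum_sqrt_le_sqrt_card_mul_sum (hf : ∀ i ∈ s, 0 ≤ f i) :
    ∑ i ∈ s, √(f i) ≤ √(s.card * ∑ i ∈ s, f i) :=
  le_sqrt_of_sq_le <| calc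
    (∑ i ∈ s, √(f i)) ^ 2 ≤ s.card * ∑ i ∈ s, √(f i) ^ 2 := sq_sum_le_card_mul_sum_sq
    _ = s.card * ∑ i ∈ s, f i := by rw [Finset.sum_congr rfl fun i hi ↦ sq_sqrt (hf i hi)]

theorem sum_slack_le (ha : 0 ≤ a) (hL : 0 ≤ L) (ht : 0 ≤ t) (hμ : ∀ i ∈ s, 0 ≤ μ i) :
    ∑ i ∈ s, (μ i * t + √(a * t * μ i * L) + b * L) ≤
      (∑ i ∈ s, μ i) * t + √a * √(s.card * L * ((∑ i ∈ s, μ i) * t)) + b * (s.card * L) := by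
  have hsqrt : ∑ i ∈ s, √(a * t * μ i * L) ≤ √a * √(s.card * L * ((∑ i ∈ s, μ i) * t)) := by
    calc ∑ i ∈ s, √(a * t * μ i * L)
        ≤ √(s.card * ∑ i ∈ s, a * t * μ i * L) :=
          sum_sqrt_le_sqrt_card_mul_sum fun i hi ↦ by have := hμ i hi; positivity
      _ = √a * √(s.card * L * ((∑ i ∈ s, μ i) * t)) := by
          rw [← sqrt_mul ha, ← Finset.sum_mul, ← Finset.mul_sum]
          ring_nf
  rw [Finset.sum_add_distrib, Finset.sum_add_distrib, ← Finset.sum_mul, Finset.sum_const,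
    nsmul_eq_mul]
  linarith

theorem stmt_11_general (ha : 0 ≤ a) (hb : 0 ≤ b) (hL : 0 ≤ L) (hN : s.card * L ≤ N)
    (hμ : ∀ i ∈ s, 0 ≤ μ i) (hS : 1 ≤ ∑ i ∈ s, μ i) (ht0 : 0 ≤ t)
    (ht : t ≤ N / ∑ i ∈ s, μ i - (√a + b) * √(s.card * (N / ∑ i ∈ s, μ i) * L)) :
    ∑ i ∈ s, (μ i * t + √(a * t * μ i * L) + b * L) ≤ N := by
  set S := ∑ i ∈ s, μ i
  set K := s.card * L
  have hK : 0 ≤ K := by positivity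
  have hroom : S * t + (√a + b) * √(K * N) ≤ N :=
    mul_add_mul_sqrt_le_of_le_div_sub (by positivity) hS (by rwa [mul_right_comm] at ht)
  have hSt : S * t ≤ N := (le_add_of_nonneg_right (by positivity)).trans hroom
  calc ∑ i ∈ s, (μ i * t + √(a * t * μ i * L) + b * L)
      ≤ S * t + √a * √(K * (S * t)) + b * K := sum_slack_le ha hL ht0 hμ
    _ ≤ S * t + √a * √(K * N) + b * √(K * N) := by
        gcongr
        exact le_sqrt_mul_of_le hK hN
    _ = S * t + (√a + b) * √(K * N) := by ring
    _ ≤ N := hroom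

end Slack

/-- Correctness-constraint step in the proof of Theorem 5.3: with `L = ln(k/δ)`,
`N > k L`, learned upper bounds `μ̂_i ≥ 0` summing to `Σ̂ ≥ 1`, and
`t = N/Σ̂ − (√2 + 2/3)√(k (N/Σ̂) L) ≥ 0`, the learned slacks satisfy
`Σ_i [μ̂_i t + √(2 t μ̂_i L) + (2/3) L] ≤ N`. -/
theorem stmt_11 (k : ℕ) (hk : 0 < k)
    (δ : ℝ) (hδ : δ ∈ Set.Ioo (0 : ℝ) 1) (hkδ : 1 < (k : ℝ) / δ)
    (L : ℝ) (hL : L = Real.log ((k : ℝ) / δ))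
    (N : ℝ) (hN : k * L < N)
    (μhat : Fin k → ℝ) (hμhat0 : ∀ i, 0 ≤ μhat i)
    (Shat : ℝ) (hShat : Shat = ∑ i, μhat i) (hShat1 : 1 ≤ Shat)
    (t : ℝ) (ht : t = N / Shat - (Real.sqrt 2 + 2 / 3) * Real.sqrt (k * (N / Shat) * L))
    (ht0 : 0 ≤ t) :
    ∑ i, (μhat i * t + Real.sqrt (2 * t * μhat i * L) + (2 / 3) * L) ≤ N := by
  subst hShat
  have hL0 : 0 ≤ L := hL ▸ (log_pos hkδ).le
  exact stmt_11_general zero_le_two (by norm_num) hL0 (by simpa using hN.le) (fun i _ ↦ hμhat0 i)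
    hShat1 ht0 (by simpa using ht.le)
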